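/- Let L and L_p be real m×m matrices with operator norms ‖L‖₂ ≤ 1 and ‖L_p‖₂ ≤ 1, let c_0, c_1, …, c_N be real numbers, and define the filter h(M) = Σ_{n=0}^{N} c_n·(−M)^n/n!. Then for every vector x ∈ ℝ^m, ‖(I + h(L_p))x − (I + h(L))x‖ ≤ (Σ_{n=1}^{N} |c_n|/(n−1)!)·‖L_p − L‖₂·‖x‖, where ‖x‖ is the Euclidean norm. -/

import Mathlib

/-- The operator norm (spectral norm) of a real square matrix, i.e. the norm
induced by the Euclidean vector norm. -/
noncomputable def l2OpNorm {m : ℕ} (A : Matrix (Fin m) (Fin m) ℝ) : ℝ :=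
  ‖Matrix.toEuclideanCLM (𝕜 := ℝ) A‖

/-- The SPCNet filter `h(M) = Σ_{n=0}^{N} c_n·(−M)^n/n!`. -/
noncomputable def spcnetFilter {m : ℕ} (N : ℕ) (c : ℕ → ℝ)
    (M : Matrix (Fin m) (Fin m) ℝ) : Matrix (Fin m) (Fin m) ℝ :=
  ∑ n ∈ Finset.range (N + 1), (c n / n.factorial) • (-M) ^ n

/-!
On the ball of radius `r` the map `a ↦ aⁿ` is Lipschitz with constant `n rⁿ⁻¹`, because
`aⁿ - bⁿ` telescopes into `n` products with one factor `a - b` each, even if `a` and `b` do not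
commute. The weight `c_n / n!` turns this constant into `|c_n| rⁿ⁻¹ / (n - 1)!`, and the identity
mapping cancels in the difference.
-/

/-- The filter `h(a) = Σ_{n=0}^{N} c_n·(−a)^n/n!` at an element `a` of an arbitrary algebra, so that
it applies to bounded operators as well as to matrices, where it is `spcnetFilter`. -/
def expFilter {𝕜 R : Type*} [Field 𝕜] [Ring R] [Algebra 𝕜 R] (N : ℕ) (c : ℕ → 𝕜) (a : R) : R :=
  ∑ n ∈ Finset.range (N + 1), (c n / n.factorial) • (-a) ^ n

theorem map_expFilter {𝕜 R S F : Type*} [Field 𝕜] [Ring R] [Algebra 𝕜 R] [Ring S] [Algebra 𝕜 S]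
    [FunLike F R S] [AlgHomClass F 𝕜 R S] (f : F) (N : ℕ) (c : ℕ → 𝕜) (a : R) :
    f (expFilter N c a) = expFilter N c (f a) := by
  simp only [expFilter, map_sum, map_smul, map_pow, map_neg]

section SeminormedRing

variable {R : Type*} [SeminormedRing R] {a b : R} {r : ℝ}

-- Multiplying by `x` keeps the case `n = 0` true in rings where `‖1‖ > 1`.
theorem norm_pow_mul_le_of_norm_le (ha : ‖a‖ ≤ r) (x : R) (n : ℕ) :
    ‖a ^ n * x‖ ≤ r ^ n * ‖x‖ := by
  have hr : 0 ≤ r := (norm_nonneg a).trans ha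
  induction n with
  | zero => simp only [pow_zero, one_mul, le_refl]
  | succ n ih =>
    calc ‖a ^ (n + 1) * x‖ = ‖a * (a ^ n * x)‖ := by rw [pow_succ', mul_assoc]
      _ ≤ ‖a‖ * ‖a ^ n * x‖ := norm_mul_le _ _
      _ ≤ r * (r ^ n * ‖x‖) := by gcongr
      _ = r ^ (n + 1) * ‖x‖ := by ring

theorem norm_pow_sub_pow_le (ha : ‖a‖ ≤ r) (hb : ‖b‖ ≤ r) (n : ℕ) :
    ‖a ^ n - b ^ n‖ ≤ n * r ^ (n - 1) * ‖a - b‖ := by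
  have hr : 0 ≤ r := (norm_nonneg a).trans ha
  induction n with
  | zero => simp
  | succ n ih =>
    have telescope : a ^ (n + 1) - b ^ (n + 1) = a ^ n * (a - b) + (a ^ n - b ^ n) * b := by
      rw [pow_succ, pow_succ]
      noncomm_ring
    have pow_pred : n * r ^ (n - 1) * r = n * r ^ n := by
      cases n with
      | zero => simp
      | succ k => rw [Nat.add_sub_cancel, mul_assoc, ← pow_succ]
    calc ‖a ^ (n + 1) - b ^ (n + 1)‖
        ≤ ‖a ^ n * (a - b)‖ + ‖a ^ n - b ^ n‖ * ‖b‖ := by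
          rw [telescope]
          exact norm_add_le_of_le le_rfl (norm_mul_le _ _)
      _ ≤ r ^ n * ‖a - b‖ + n * r ^ (n - 1) * ‖a - b‖ * r := by
          gcongr
          exact norm_pow_mul_le_of_norm_le ha _ n
      _ = r ^ n * ‖a - b‖ + n * r ^ (n - 1) * r * ‖a - b‖ := by ring
      _ = (n + 1 : ℕ) * r ^ (n + 1 - 1) * ‖a - b‖ := by
          rw [pow_pred, Nat.add_sub_cancel]
          push_cast
          ring

theorem norm_sum_smul_pow_sub_le {𝕜 : Type*} [NormedField 𝕜] [NormedAlgebra 𝕜 R]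
    (ha : ‖a‖ ≤ r) (hb : ‖b‖ ≤ r) (s : Finset ℕ) (w : ℕ → 𝕜) :
    ‖∑ n ∈ s, w n • a ^ n - ∑ n ∈ s, w n • b ^ n‖ ≤
      (∑ n ∈ s, ‖w n‖ * (n * r ^ (n - 1))) * ‖a - b‖ := by
  rw [← Finset.sum_sub_distrib, Finset.sum_mul]
  refine norm_sum_le_of_le s fun n _ => ?_
  calc ‖w n • a ^ n - w n • b ^ n‖ ≤ ‖w n‖ * ‖a ^ n - b ^ n‖ := by
        rw [← smul_sub]
        exact norm_smul_le _ _
    _ ≤ ‖w n‖ * (n * r ^ (n - 1) * ‖a - b‖) := by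
        gcongr
        exact norm_pow_sub_pow_le ha hb n
    _ = ‖w n‖ * (n * r ^ (n - 1)) * ‖a - b‖ := (mul_assoc _ _ _).symm

theorem norm_expFilter_sub_le {𝕜 : Type*} [RCLike 𝕜] [NormedAlgebra 𝕜 R]
    (ha : ‖a‖ ≤ r) (hb : ‖b‖ ≤ r) (N : ℕ) (c : ℕ → 𝕜) :
    ‖expFilter N c a - expFilter N c b‖ ≤
      (∑ n ∈ Finset.Icc 1 N, ‖c n‖ * r ^ (n - 1) / (n - 1).factorial) * ‖a - b‖ := by
  have weight (n : ℕ) (hn : n ∈ Finset.Icc 1 N) :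
      ‖c n / (n.factorial : 𝕜)‖ * (n * r ^ (n - 1)) =
        ‖c n‖ * r ^ (n - 1) / (n - 1).factorial := by
    obtain ⟨k, rfl⟩ := Nat.exists_eq_add_of_le' (Finset.mem_Icc.mp hn).1
    rw [norm_div, RCLike.norm_natCast, Nat.factorial_succ, Nat.add_sub_cancel]
    push_cast
    field_simp
  have reindex : ∑ n ∈ Finset.range (N + 1), ‖c n / (n.factorial : 𝕜)‖ * (n * r ^ (n - 1)) =
      ∑ n ∈ Finset.Icc 1 N, ‖c n‖ * r ^ (n - 1) / (n - 1).factorial := by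
    rw [Finset.sum_range_eq_add_Ico _ N.succ_pos, Nat.cast_zero, zero_mul, mul_zero, zero_add]
    exact Finset.sum_congr rfl weight
  have hneg : ‖-a - -b‖ = ‖a - b‖ := by rw [← neg_sub', norm_neg]
  rw [← reindex, ← hneg]
  exact norm_sum_smul_pow_sub_le (by rwa [norm_neg]) (by rwa [norm_neg]) _ _

end SeminormedRing

theorem spcnet_propagation_stable_general {𝕜 E : Type*} [RCLike 𝕜] [SeminormedAddCommGroup E]
    [NormedSpace 𝕜 E] {L Lp : E →L[𝕜] E} {r : ℝ} (hL : ‖L‖ ≤ r) (hLp : ‖Lp‖ ≤ r)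
    (N : ℕ) (c : ℕ → 𝕜) (x : E) :
    ‖(1 + expFilter N c Lp) x - (1 + expFilter N c L) x‖ ≤
      (∑ n ∈ Finset.Icc 1 N, ‖c n‖ * r ^ (n - 1) / (n - 1).factorial) * ‖Lp - L‖ * ‖x‖ := by
  rw [← sub_apply, add_sub_add_left_eq_sub]
  exact ContinuousLinearMap.le_of_opNorm_le _ (norm_expFilter_sub_le hLp hL N c) x

theorem toEuclideanCLM_spcnetFilter {m : ℕ} (N : ℕ) (c : ℕ → ℝ) (M : Matrix (Fin m) (Fin m) ℝ) :
    Matrix.toEuclideanCLM (𝕜 := ℝ) (spcnetFilter N c M) =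
      expFilter N c (Matrix.toEuclideanCLM (𝕜 := ℝ) M) :=
  map_expFilter (Matrix.toEuclideanCLM (𝕜 := ℝ)) N c M

/-- For `‖L‖₂ ≤ 1`, `‖L_p‖₂ ≤ 1` and every vector `x ∈ ℝ^m` (with its Euclidean
norm), `‖(I + h(L_p))x − (I + h(L))x‖ ≤ (Σ_{n=1}^{N} |c_n|/(n−1)!)·‖L_p − L‖₂·‖x‖`. -/
theorem spcnet_propagation_stable {m : ℕ} (L Lp : Matrix (Fin m) (Fin m) ℝ)
    (hL : l2OpNorm L ≤ 1) (hLp : l2OpNorm Lp ≤ 1) (N : ℕ) (c : ℕ → ℝ)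
    (x : EuclideanSpace ℝ (Fin m)) :
    ‖Matrix.toEuclideanCLM (𝕜 := ℝ) (1 + spcnetFilter N c Lp) x -
        Matrix.toEuclideanCLM (𝕜 := ℝ) (1 + spcnetFilter N c L) x‖ ≤
      (∑ n ∈ Finset.Icc 1 N, |c n| / (n - 1).factorial) * l2OpNorm (Lp - L) * ‖x‖ := by
  simpa only [map_add, map_one, map_sub, toEuclideanCLM_spcnetFilter, l2OpNorm, one_pow, mul_one,
    Real.norm_eq_abs] using spcnet_propagation_stable_general hL hLp N c x
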